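/- Let (γ_k)_{k=0}^∞ be a Legendre multiplier sequence. Then either γ_k·γ_{k+1} ≥ 0 for all k ≥ 0 (the terms are all of the same sign), or γ_k·γ_{k+1} ≤ 0 for all k ≥ 0 (the terms alternate in sign). -/

import Mathlib

open Polynomial

/-- A real polynomial is *hyperbolic* if all of its complex roots are real
(the zero polynomial and nonzero constants are vacuously hyperbolic). -/
def Hyperbolic (p : Polynomial ℝ) : Prop :=
  ∀ z ∈ (p.map (algebraMap ℝ ℂ)).roots, z.im = 0

/-- `γ` is a multiplier sequence for the simple set `q`: the linear operator
sending `q k` to `γ k • q k` maps hyperbolic polynomials to hyperbolic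
polynomials.  (Since `q` is a simple set, every real polynomial has a unique
expansion `∑ a k • q k`, so this quantification over coefficient families
expresses exactly that property.) -/
def IsMultiplierSeqFor (q : ℕ → Polynomial ℝ) (γ : ℕ → ℝ) : Prop :=
  ∀ (n : ℕ) (a : ℕ → ℝ),
    Hyperbolic (∑ k ∈ Finset.range n, C (a k) * q k) →
    Hyperbolic (∑ k ∈ Finset.range n, C (γ k * a k) * q k)

/-- The Legendre polynomials, via Rodrigues' formula
`Le n = (1/(2^n n!)) Dⁿ[(x²-1)ⁿ]`. -/
noncomputable def legendre (n : ℕ) : Polynomial ℝ :=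
  C (1 / (2 ^ n * n.factorial : ℝ)) * derivative^[n] ((X ^ 2 - 1) ^ n)

/-- A Legendre multiplier sequence. -/
def IsLegendreMS (γ : ℕ → ℝ) : Prop := IsMultiplierSeqFor legendre γ

open Filter Topology

/-! The argument works for every simple set `q`. If `T` is the diagonal operator `q k ↦ γ k • q k`,
then conjugating `T` by the dilation `x ↦ ε x` and letting `ε → 0` keeps only the leading terms, so
the limit is the operator `X ^ k ↦ γ k • X ^ k`. Hyperbolicity means that `‖p z‖` is monotone in
`|Im z|` on vertical lines, a condition which passes to pointwise limits; hence `γ` is a multiplier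
sequence for the monomials as well, and so are its shifts.

A hyperbolic polynomial satisfies `2 a₀ a₂ ≤ a₁ ^ 2`, strictly if it is nonconstant and `a₀ ≠ 0`.
Applied to the images of `X ^ 2 - 1` and `(X + 1) ^ n`, this shows that `γ k` and `γ (k + 2)` never
have opposite signs and that the support of `γ` is an interval, which forces the sign pattern. -/

section Laguerre

variable {R : Type*}

lemma coeff_one_sq_sub_two_mul_X_sub_C_mul [CommRing R] (a : R) (p : R[X]) :
    ((X - C a) * p).coeff 1 ^ 2 - 2 * (((X - C a) * p).coeff 0 * ((X - C a) * p).coeff 2) =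
      p.coeff 0 ^ 2 + a ^ 2 * (p.coeff 1 ^ 2 - 2 * (p.coeff 0 * p.coeff 2)) := by
  simp only [sub_mul, coeff_sub, coeff_X_mul, coeff_X_mul_zero, coeff_C_mul]
  ring

variable [CommRing R] [LinearOrder R] [IsStrictOrderedRing R] {p : R[X]}

lemma two_mul_coeff_zero_mul_coeff_two_le (hp : p.Splits) :
    2 * (p.coeff 0 * p.coeff 2) ≤ p.coeff 1 ^ 2 := by
  obtain ⟨s, hs⟩ := splits_iff_exists_multiset.mp hp
  rw [hs]
  generalize p.leadingCoeff = c
  clear hs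
  induction s using Multiset.induction_on with
  | empty => simp [coeff_C]
  | cons a s ih =>
    rw [Multiset.map_cons, Multiset.prod_cons, mul_left_comm (C c), ← sub_nonneg,
      coeff_one_sq_sub_two_mul_X_sub_C_mul]
    exact add_nonneg (sq_nonneg _) (mul_nonneg (sq_nonneg a) (sub_nonneg.mpr ih))

lemma two_mul_coeff_zero_mul_coeff_two_lt (hp : p.Splits) (hdeg : p.degree ≠ 0)
    (h0 : p.coeff 0 ≠ 0) : 2 * (p.coeff 0 * p.coeff 2) < p.coeff 1 ^ 2 := by
  obtain ⟨a, ha⟩ := hp.exists_eval_eq_zero hdeg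
  obtain ⟨q, rfl⟩ := dvd_iff_isRoot.mpr ha
  have hq : q.Splits := splits_X_sub_C_mul_iff.mp hp
  have hq0 : q.coeff 0 ≠ 0 := by
    rw [mul_coeff_zero] at h0
    exact right_ne_zero_of_mul h0
  rw [← sub_pos, coeff_one_sq_sub_two_mul_X_sub_C_mul]
  exact add_pos_of_pos_of_nonneg (by positivity)
    (mul_nonneg (sq_nonneg a) (sub_nonneg.mpr (two_mul_coeff_zero_mul_coeff_two_le hq)))

end Laguerre

section Hyperbolic

variable {p : ℝ[X]}

lemma hyperbolic_iff_splits : Hyperbolic p ↔ p.Splits := by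
  refine ⟨fun hp => ?_, fun hp z hz => ?_⟩
  · exact (IsAlgClosed.splits _).of_splits_map (algebraMap ℝ ℂ) fun z hz =>
      ⟨z.re, Complex.ext rfl (hp z hz).symm⟩
  · rw [hp.roots_map, Multiset.mem_map] at hz
    obtain ⟨x, -, rfl⟩ := hz
    exact Complex.ofReal_im x

lemma Hyperbolic.norm_aeval_le (hp : Hyperbolic p) {z w : ℂ} (hre : z.re = w.re)
    (him : |z.im| ≤ |w.im|) : ‖aeval z p‖ ≤ ‖aeval w p‖ := by
  have norm_sub_le (a : ℂ) (ha : a.im = 0) : ‖z - a‖ ≤ ‖w - a‖ := by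
    rw [← sq_le_sq₀ (norm_nonneg _) (norm_nonneg _), Complex.sq_norm, Complex.sq_norm]
    simpa [Complex.normSq_apply, hre, ha, ← sq] using sq_le_sq.mpr him
  have hsplits : (p.map (algebraMap ℝ ℂ)).Splits := IsAlgClosed.splits _
  have norm_prod (u : ℂ) : ‖((p.aroots ℂ).map (u - ·)).prod‖ =
      ((p.aroots ℂ).map (‖u - ·‖)).prod := by
    simpa [Multiset.map_map] using map_multiset_prod (normHom (α := ℂ)) ((p.aroots ℂ).map (u - ·))
  simp only [hsplits.aeval_eq_prod_aroots, norm_mul, norm_prod]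
  exact mul_le_mul_of_nonneg_left (Multiset.prod_map_le_prod_map₀ _ _
    (fun _ _ => norm_nonneg _) fun a ha => norm_sub_le a (hp a ha)) (norm_nonneg _)

lemma hyperbolic_iff_norm_aeval_le : Hyperbolic p ↔
    ∀ z w : ℂ, z.re = w.re → |z.im| ≤ |w.im| → ‖aeval z p‖ ≤ ‖aeval w p‖ := by
  refine ⟨fun hp z w => hp.norm_aeval_le, fun hp w hw => ?_⟩
  obtain ⟨hp0, hw⟩ := mem_aroots.mp hw
  by_contra him
  have vertical_root (t : ℝ) (ht : |t| ≤ |w.im|) : aeval (⟨w.re, t⟩ : ℂ) p = 0 := by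
    simpa [hw] using hp ⟨w.re, t⟩ w rfl ht
  have infinite_roots : (p.rootSet ℂ).Infinite :=
    Set.infinite_of_injOn_mapsTo (f := fun t : ℝ => (⟨w.re, t⟩ : ℂ))
      (fun s _ t _ hst => congrArg Complex.im hst)
      (fun t ht => mem_rootSet.mpr ⟨hp0, vertical_root t (abs_le.mpr ht)⟩)
      (Set.Icc_infinite (neg_lt_self (abs_pos.mpr him)))
  exact infinite_roots (p.rootSet_finite ℂ)

lemma Hyperbolic.comp_C_mul_X (hp : Hyperbolic p) (c : ℝ) : Hyperbolic (p.comp (C c * X)) :=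
  hyperbolic_iff_splits.mpr <| (hyperbolic_iff_splits.mp hp).comp_of_natDegree_le_one <|
    (natDegree_C_mul_le c X).trans natDegree_X_le

lemma hyperbolic_of_tendsto {ι : Type*} {l : Filter ι} [l.NeBot] {P : ι → ℝ[X]}
    (hP : ∀ᶠ i in l, Hyperbolic (P i))
    (hlim : ∀ z : ℂ, Tendsto (fun i => aeval z (P i)) l (𝓝 (aeval z p))) : Hyperbolic p :=
  hyperbolic_iff_norm_aeval_le.mpr fun z w hre him =>
    le_of_tendsto_of_tendsto (hlim z).norm (hlim w).norm <|
      hP.mono fun _ hi => hi.norm_aeval_le hre him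

end Hyperbolic

section MultiplierOp

variable {K : Type*} [Field K]

lemma isUnit_leadingCoeff (q : Polynomial.Sequence K) (k : ℕ) : IsUnit (q k).leadingCoeff :=
  (leadingCoeff_ne_zero.mpr (q.ne_zero k)).isUnit

lemma exists_eq_sum_range (q : Polynomial.Sequence K) (p : K[X]) :
    ∃ (n : ℕ) (a : ℕ → K), p = ∑ k ∈ Finset.range n, C (a k) * q k := by
  let b := q.basis (isUnit_leadingCoeff q)
  obtain ⟨n, hn⟩ := (b.repr p).support.exists_nat_subset_range
  refine ⟨n, b.repr p, ?_⟩
  conv_lhs => rw [← b.linearCombination_repr p, Finsupp.linearCombination_apply,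
    Finsupp.sum_of_support_subset _ hn _ (by simp)]
  simp only [b, q.basis_eq_self, smul_eq_C_mul]

/-- The linear operator `q k ↦ γ k • q k` attached to a sequence `γ` and a simple set `q`. -/
noncomputable def multiplierOp (q : Polynomial.Sequence K) (γ : ℕ → K) : K[X] →ₗ[K] K[X] :=
  (q.basis (isUnit_leadingCoeff q)).constr K fun k => γ k • q k

variable (q : Polynomial.Sequence K) (γ : ℕ → K) {p : K[X]} {n : ℕ}

lemma multiplierOp_apply_self (k : ℕ) : multiplierOp q γ (q k) = γ k • q k := by
  conv_lhs => rw [multiplierOp, ← q.basis_eq_self (isUnit_leadingCoeff q) k]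
  exact Module.Basis.constr_basis _ K _ k

lemma coeff_multiplierOp (hp : p.natDegree ≤ n) :
    (multiplierOp q γ p).coeff n = γ n * p.coeff n := by
  have hspan : p ∈ Submodule.span K (q '' Set.Iic n) := by
    rw [q.span_degreeLE fun i _ => isUnit_leadingCoeff q i]
    exact mem_degreeLE.mpr (natDegree_le_iff_degree_le.mp hp)
  clear hp
  induction hspan using Submodule.span_induction with
  | mem _ hmem =>
    obtain ⟨k, hk, rfl⟩ := hmem
    rw [multiplierOp_apply_self, coeff_smul, smul_eq_mul]
    rcases (Set.mem_Iic.mp hk).eq_or_lt with rfl | hlt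
    · rfl
    · rw [coeff_eq_zero_of_natDegree_lt (by rwa [q.natDegree_eq]), mul_zero, mul_zero]
  | zero => simp
  | add r s _ _ hr hs => rw [map_add, coeff_add, hr, hs, coeff_add, mul_add]
  | smul c r _ hr =>
    rw [map_smul, coeff_smul, hr, coeff_smul, smul_eq_mul, smul_eq_mul, mul_left_comm]

lemma natDegree_multiplierOp_le : (multiplierOp q γ p).natDegree ≤ p.natDegree := by
  refine natDegree_le_iff_coeff_eq_zero.mpr fun n hn => ?_
  rw [coeff_multiplierOp q γ hn.le, coeff_eq_zero_of_natDegree_lt hn, mul_zero]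

end MultiplierOp

lemma tendsto_pow_mul_aeval_inv_mul {R K : Type*} [CommSemiring R] [Field K] [TopologicalSpace K]
    [IsTopologicalRing K] [Algebra R K] {g : R[X]} {k : ℕ} (hg : g.natDegree ≤ k) (z : K) :
    Tendsto (fun ε : K => ε ^ k * aeval (ε⁻¹ * z) g) (𝓝[≠] 0)
      (𝓝 (algebraMap R K (g.coeff k) * z ^ k)) := by
  let G (ε : K) : K :=
    ∑ i ∈ Finset.range (k + 1), algebraMap R K (g.coeff i) * ε ^ (k - i) * z ^ i
  have hG_zero : G 0 = algebraMap R K (g.coeff k) * z ^ k := by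
    simp only [G, Finset.sum_range_succ, Nat.sub_self, pow_zero, mul_one, add_eq_right]
    refine Finset.sum_eq_zero fun i hi => ?_
    rw [zero_pow (Nat.sub_ne_zero_of_lt (Finset.mem_range.mp hi)), mul_zero, zero_mul]
  have hG_eq {ε : K} (hε : ε ≠ 0) : G ε = ε ^ k * aeval (ε⁻¹ * z) g := by
    rw [aeval_eq_sum_range' (Nat.lt_succ_of_le hg), Finset.mul_sum]
    refine Finset.sum_congr rfl fun i hi => ?_
    rw [pow_sub₀ ε hε (Finset.mem_range_succ_iff.mp hi), mul_pow, inv_pow, Algebra.smul_def]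
    ring
  have hG_tendsto : Tendsto G (𝓝[≠] 0) (𝓝 (G 0)) :=
    (Continuous.tendsto (by fun_prop) 0).mono_left nhdsWithin_le_nhds
  rw [← hG_zero]
  exact hG_tendsto.congr' (eventually_mem_nhdsWithin.mono fun ε hε => hG_eq hε)

namespace IsMultiplierSeqFor

variable {γ : ℕ → ℝ}

lemma hyperbolic_multiplierOp {q : Polynomial.Sequence ℝ} (h : IsMultiplierSeqFor q γ) {p : ℝ[X]}
    (hp : Hyperbolic p) : Hyperbolic (multiplierOp q γ p) := by
  obtain ⟨n, a, rfl⟩ := exists_eq_sum_range q p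
  have himage : multiplierOp q γ (∑ k ∈ Finset.range n, C (a k) * q k) =
      ∑ k ∈ Finset.range n, C (γ k * a k) * q k := by
    simp only [← smul_eq_C_mul, map_sum, map_smul, multiplierOp_apply_self, smul_smul,
      mul_comm (a _)]
  rw [himage]
  exact h n a hp

theorem monomial {q : Polynomial.Sequence ℝ} (h : IsMultiplierSeqFor q γ) :
    IsMultiplierSeqFor (X ^ ·) γ := by
  intro n a ha
  set f : ℝ[X] := ∑ k ∈ Finset.range n, C (a k) * X ^ k with hf
  let P (ε : ℝ) : ℝ[X] := (multiplierOp q γ (f.comp (C ε * X))).comp (C ε⁻¹ * X)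
  have hP (ε : ℝ) : Hyperbolic (P ε) :=
    (h.hyperbolic_multiplierOp (ha.comp_C_mul_X ε)).comp_C_mul_X ε⁻¹
  have aeval_P (ε : ℝ) (z : ℂ) : aeval z (P ε) = ∑ k ∈ Finset.range n,
      (a k : ℂ) * ((ε : ℂ) ^ k * aeval ((ε : ℂ)⁻¹ * z) (multiplierOp q γ (X ^ k))) := by
    have dilate_f : f.comp (C ε * X) = ∑ k ∈ Finset.range n, (a k * ε ^ k) • (X ^ k : ℝ[X]) := by
      simp [hf, sum_comp, mul_pow, smul_eq_C_mul, mul_assoc]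
    simp [P, dilate_f, aeval_comp, mul_assoc]
  refine hyperbolic_of_tendsto (l := 𝓝[≠] (0 : ℝ)) (.of_forall hP) fun z => ?_
  simp only [aeval_P, map_sum]
  refine tendsto_finsetSum _ fun k _ => ?_
  have tendsto_ofReal : Tendsto Complex.ofReal (𝓝[≠] 0) (𝓝[≠] 0) :=
    tendsto_nhdsWithin_iff.mpr
      ⟨(Complex.continuous_ofReal.tendsto' 0 0 rfl).mono_left nhdsWithin_le_nhds,
        eventually_mem_nhdsWithin.mono fun _ => Complex.ofReal_ne_zero.mpr⟩
  have hdeg : (multiplierOp q γ (X ^ k)).natDegree ≤ k :=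
    (natDegree_multiplierOp_le q γ).trans (natDegree_X_pow_le k)
  have hcoeff : (multiplierOp q γ (X ^ k)).coeff k = γ k := by
    rw [coeff_multiplierOp q γ (natDegree_X_pow_le k), coeff_X_pow_self, mul_one]
  have hlim := ((tendsto_pow_mul_aeval_inv_mul hdeg z).comp tendsto_ofReal).const_mul (a k : ℂ)
  simpa [hcoeff, mul_left_comm, mul_assoc] using hlim

lemma exists_splits_coeff_eq (h : IsMultiplierSeqFor (X ^ ·) γ) {p : ℝ[X]} (hp : p.Splits) :
    ∃ r : ℝ[X], r.Splits ∧ ∀ k, r.coeff k = γ k * p.coeff k := by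
  refine ⟨∑ k ∈ Finset.range (p.natDegree + 1), C (γ k * p.coeff k) * X ^ k,
    hyperbolic_iff_splits.mp (h _ p.coeff ?_), fun k => ?_⟩
  · rw [← as_sum_range_C_mul_X_pow]
    exact hyperbolic_iff_splits.mpr hp
  · simp only [finsetSum_coeff, coeff_C_mul_X_pow, Finset.sum_ite_eq, Finset.mem_range,
      Order.lt_add_one_iff, ite_eq_left_iff, not_le]
    intro hk
    rw [coeff_eq_zero_of_natDegree_lt hk, mul_zero]

lemma shift (h : IsMultiplierSeqFor (X ^ ·) γ) (i : ℕ) :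
    IsMultiplierSeqFor (X ^ ·) (fun k => γ (i + k)) := by
  intro n a ha
  have hsplits := (Splits.X_pow i).mul (hyperbolic_iff_splits.mp ha)
  obtain ⟨r, hr, hcoeff⟩ := h.exists_splits_coeff_eq hsplits
  suffices hr_eq : r = X ^ i * ∑ k ∈ Finset.range n, C (γ (i + k) * a k) * X ^ k by
    exact hyperbolic_iff_splits.mpr <|
      (splits_mul_iff_right (pow_ne_zero i X_ne_zero) (Splits.X_pow i)).mp (hr_eq ▸ hr)
  ext m
  rw [hcoeff, coeff_X_pow_mul', coeff_X_pow_mul']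
  split_ifs with him
  · simp only [finsetSum_coeff, coeff_C_mul_X_pow, Finset.sum_ite_eq, Nat.add_sub_of_le him,
      mul_ite, mul_zero]
  · rw [mul_zero]

lemma mul_add_two_nonneg (h : IsMultiplierSeqFor (X ^ ·) γ) (i : ℕ) : 0 ≤ γ i * γ (i + 2) := by
  have hp : (X ^ 2 - 1 : ℝ[X]).Splits := by
    rw [← one_pow 2, sq_sub_sq, ← C_1]
    exact (Splits.X_add_C 1).mul (Splits.X_sub_C 1)
  obtain ⟨r, hr, hcoeff⟩ := (h.shift i).exists_splits_coeff_eq hp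
  have hlaguerre : 2 * (-γ i * γ (i + 2)) ≤ 0 := by
    simpa [hcoeff, coeff_X_pow, coeff_one] using two_mul_coeff_zero_mul_coeff_two_le hr
  linarith

lemma succ_ne_zero (h : IsMultiplierSeqFor (X ^ ·) γ) {i j : ℕ} (hij : i < j) (hi : γ i ≠ 0)
    (hj : γ j ≠ 0) : γ (i + 1) ≠ 0 := by
  intro hsucc
  obtain ⟨n, rfl⟩ := Nat.exists_eq_add_of_lt hij
  obtain ⟨r, hr, hcoeff⟩ :=
    (h.shift i).exists_splits_coeff_eq ((Splits.X_add_C 1).pow (n + 1))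
  simp only [map_one, coeff_X_add_one_pow] at hcoeff
  have hr0 : r.coeff 0 ≠ 0 := by simpa [hcoeff] using hi
  have hdeg : r.degree ≠ 0 := by
    intro hdeg
    have hr_top : r.coeff (n + 1) = 0 :=
      coeff_eq_zero_of_degree_lt (by rw [hdeg]; exact_mod_cast n.succ_pos)
    rw [hcoeff, Nat.choose_self, Nat.cast_one, mul_one] at hr_top
    exact hj hr_top
  have hlaguerre : 2 * (γ i * (γ (i + 2) * (n + 1).choose 2)) < 0 := by
    simpa [hcoeff, hsucc] using two_mul_coeff_zero_mul_coeff_two_lt hr hdeg hr0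
  have htwo := mul_nonneg (h.mul_add_two_nonneg i) ((n + 1).choose 2).cast_nonneg
  linarith

theorem ordConnected_support (h : IsMultiplierSeqFor (X ^ ·) γ) :
    (Function.support γ).OrdConnected := by
  refine ⟨fun i hi k hk j ⟨hij, hjk⟩ => ?_⟩
  induction j, hij using Nat.le_induction with
  | base => exact hi
  | succ j hij ih =>
    have hjk' : j ≤ k := Nat.le_of_succ_le hjk
    exact h.succ_ne_zero hjk (ih ⟨hij, hjk'⟩ hjk') hk

theorem consecutive_mul_nonneg (h : IsMultiplierSeqFor (X ^ ·) γ) {k m : ℕ} (hkm : k ≤ m) :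
    0 ≤ γ k * γ (k + 1) * (γ m * γ (m + 1)) := by
  induction m, hkm using Nat.le_induction with
  | base => exact mul_self_nonneg _
  | succ m hkm ih =>
    by_cases hk : γ k = 0
    · simp [hk]
    by_cases hm2 : γ (m + 2) = 0
    · simp [hm2]
    have hm : γ m ≠ 0 := h.ordConnected_support.out hk hm2 ⟨hkm, by lia⟩
    have hstep : 0 ≤ γ k * γ (k + 1) * (γ (m + 1) * γ (m + 2)) * γ m ^ 2 :=
      calc 0 ≤ γ k * γ (k + 1) * (γ m * γ (m + 1)) * (γ m * γ (m + 2)) :=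
            mul_nonneg ih (h.mul_add_two_nonneg m)
        _ = γ k * γ (k + 1) * (γ (m + 1) * γ (m + 2)) * γ m ^ 2 := by ring
    exact nonneg_of_mul_nonneg_left hstep (by positivity)

end IsMultiplierSeqFor

theorem stmt_2_general (q : Polynomial.Sequence ℝ) (γ : ℕ → ℝ) (h : IsMultiplierSeqFor q γ) :
    (∀ k, 0 ≤ γ k * γ (k + 1)) ∨ (∀ k, γ k * γ (k + 1) ≤ 0) := by
  by_contra! hcon
  obtain ⟨⟨k, hk⟩, m, hm⟩ := hcon
  have hneg : γ k * γ (k + 1) * (γ m * γ (m + 1)) < 0 := mul_neg_of_neg_of_pos hk hm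
  rcases le_total k m with hkm | hmk
  · exact hneg.not_ge (h.monomial.consecutive_mul_nonneg hkm)
  · exact hneg.not_ge (mul_comm (γ m * _) _ ▸ h.monomial.consecutive_mul_nonneg hmk)

lemma degree_legendre (n : ℕ) : (legendre n).degree = n := by
  have hmonic : ((X ^ 2 - 1 : ℝ[X]) ^ n).Monic := by
    rw [← C_1]
    exact (monic_X_pow_sub_C 1 two_ne_zero).pow n
  have hdeg : ((X ^ 2 - 1 : ℝ[X]) ^ n).natDegree = n + n := by
    rw [← C_1, natDegree_pow, natDegree_X_pow_sub_C, mul_two]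
  have hderiv_le : (derivative^[n] ((X ^ 2 - 1 : ℝ[X]) ^ n)).natDegree ≤ n :=
    (natDegree_iterate_derivative _ n).trans (by lia)
  have hderiv_coeff : (derivative^[n] ((X ^ 2 - 1 : ℝ[X]) ^ n)).coeff n ≠ 0 := by
    rw [coeff_iterate_derivative, ← hdeg, hmonic.coeff_natDegree, hdeg, nsmul_one]
    exact_mod_cast (Nat.descFactorial_pos.mpr (n.le_add_left n)).ne'
  rw [legendre, degree_C_mul (by positivity)]
  exact degree_eq_of_le_of_coeff_ne_zero (natDegree_le_iff_degree_le.mp hderiv_le) hderiv_coeff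

/-- The Legendre polynomials as a simple set. -/
noncomputable def legendreSequence : Polynomial.Sequence ℝ := ⟨legendre, degree_legendre⟩

theorem stmt_2 (γ : ℕ → ℝ) (h : IsLegendreMS γ) :
    (∀ k, 0 ≤ γ k * γ (k + 1)) ∨ (∀ k, γ k * γ (k + 1) ≤ 0) :=
  stmt_2_general legendreSequence γ h
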